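/- Quadruple sine integral, deficit regime (used in the weak formulation of the 1↔3 operator, Lemma 3.3): For all real numbers a, b, c, d with 0 < a ≤ b ≤ c ≤ d and b + c − a ≤ d ≤ a + b + c, the function s ↦ sin(a s) sin(b s) sin(c s) sin(d s)/s² is absolutely integrable on (0,∞) and ∫₀^∞ sin(a s) sin(b s) sin(c s) sin(d s)/s² ds = (π/8)·(a + b + c − d). -/

import Mathlib

open Real MeasureTheory

/-!
Writing each sine as a difference of exponentials expands a product of `2 * m` sines into cosines
of the signed sums of the frequencies, with coefficients adding up to zero. A cosine sum
`∑ cᵢ cos (ωᵢ s)` with `∑ cᵢ = 0` equals `-∑ cᵢ (1 - cos (ωᵢ s))`, so everything reduces to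
`∫ (1 - cos (t s)) / s² ds = π |t| / 2` over `(0, ∞)`. The latter comes from
`1 / s² = ∫ x e^(-x s) dx`: after exchanging the integrals, the inner one is the Laplace transform
of `1 - cos` and the outer one an arctangent integral. In the deficit regime each of the eight
absolute values has a known sign, and their signed sum collapses to `2 * (a + b + c - d)`.
-/

open Set

section Laplace

variable {x : ℝ}

lemma integrableOn_exp_neg_mul_mul_cos (hx : 0 < x) (t : ℝ) :
    IntegrableOn (fun s : ℝ => exp (-x * s) * cos (t * s)) (Ioi 0) := by
  have h := (integrableOn_exp_mul_complex_Ioi (a := ⟨-x, t⟩) (neg_neg_of_pos hx) 0).re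
  simpa [Complex.exp_re, IntegrableOn] using h

lemma integral_exp_neg_mul_mul_cos (hx : 0 < x) (t : ℝ) :
    ∫ s in Ioi (0 : ℝ), exp (-x * s) * cos (t * s) = x / (x ^ 2 + t ^ 2) := by
  have ha : (⟨-x, t⟩ : ℂ).re < 0 := neg_neg_of_pos hx
  calc
    _ = ∫ s in Ioi (0 : ℝ), (Complex.exp (⟨-x, t⟩ * s)).re := by simp [Complex.exp_re]
    _ = (-Complex.exp (⟨-x, t⟩ * (0 : ℝ)) / ⟨-x, t⟩).re := by
      rw [← integral_exp_mul_complex_Ioi ha]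
      exact integral_re (integrableOn_exp_mul_complex_Ioi ha 0)
    _ = x / (x ^ 2 + t ^ 2) := by simp [Complex.div_re, Complex.normSq_apply, sq]

lemma integral_mul_exp_neg_mul (hx : 0 < x) :
    ∫ y in Ioi (0 : ℝ), y * exp (-y * x) = 1 / x ^ 2 := by
  simpa [mul_comm x, show (2 : ℝ) - 1 = 1 by norm_num] using
    integral_rpow_mul_exp_neg_mul_Ioi two_pos hx

end Laplace

lemma sq_div_sq_add_sq_eq_inv {t : ℝ} (ht : t ≠ 0) (x : ℝ) :
    t ^ 2 / (x ^ 2 + t ^ 2) = (1 + (|t|⁻¹ * x) ^ 2)⁻¹ := by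
  rw [mul_pow, inv_pow, sq_abs]
  have : x ^ 2 + t ^ 2 ≠ 0 := by positivity
  field_simp
  ring

lemma integrable_sq_div_sq_add_sq (t : ℝ) :
    Integrable (fun x : ℝ => t ^ 2 / (x ^ 2 + t ^ 2)) := by
  obtain rfl | ht := eq_or_ne t 0
  · simp
  simpa only [sq_div_sq_add_sq_eq_inv ht] using
    integrable_inv_one_add_sq.comp_mul_left' (inv_ne_zero (abs_ne_zero.mpr ht))

lemma integral_Ioi_sq_div_sq_add_sq (t : ℝ) :
    ∫ x in Ioi (0 : ℝ), t ^ 2 / (x ^ 2 + t ^ 2) = π / 2 * |t| := by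
  obtain rfl | ht := eq_or_ne t 0
  · simp
  simp only [sq_div_sq_add_sq_eq_inv ht]
  rw [integral_comp_mul_left_Ioi (fun x : ℝ => (1 + x ^ 2)⁻¹) 0 (by positivity)]
  simp [mul_comm]

/-- The kernel `x * exp (-x * s) * (1 - cos (t * s))` on the quadrant `0 < x`, `0 < s`. It is
nonnegative, and its integrals over `x` and over `s` are `(1 - cos (t * s)) / s ^ 2` and
`t ^ 2 / (x ^ 2 + t ^ 2)` respectively, so Tonelli's theorem evaluates the former integrand. -/
noncomputable def oneSubCosKernel (t x s : ℝ) : ℝ :=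
  x * exp (-x * s) * (1 - cos (t * s))

lemma oneSubCosKernel_nonneg (t s : ℝ) {x : ℝ} (hx : 0 ≤ x) : 0 ≤ oneSubCosKernel t x s :=
  mul_nonneg (mul_nonneg hx (exp_pos _).le) (sub_nonneg.mpr (cos_le_one _))

lemma continuous_uncurry_oneSubCosKernel (t : ℝ) :
    Continuous (Function.uncurry (oneSubCosKernel t)) := by
  unfold Function.uncurry oneSubCosKernel
  fun_prop

lemma oneSubCosKernel_eq_mul_sub (t x s : ℝ) :
    oneSubCosKernel t x s = x * (exp (-x * s) - exp (-x * s) * cos (t * s)) := by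
  rw [oneSubCosKernel, mul_assoc, mul_one_sub]

lemma integrableOn_oneSubCosKernel_right (t : ℝ) {x : ℝ} (hx : 0 < x) :
    IntegrableOn (oneSubCosKernel t x) (Ioi 0) := by
  simp only [funext (oneSubCosKernel_eq_mul_sub t x)]
  exact ((integrableOn_exp_mul_Ioi (neg_neg_of_pos hx) 0).sub
    (integrableOn_exp_neg_mul_mul_cos hx t)).const_mul x

lemma integral_oneSubCosKernel_right (t : ℝ) {x : ℝ} (hx : 0 < x) :
    ∫ s in Ioi (0 : ℝ), oneSubCosKernel t x s = t ^ 2 / (x ^ 2 + t ^ 2) := by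
  have hx' : -x < 0 := neg_neg_of_pos hx
  calc
    _ = x * ∫ s in Ioi (0 : ℝ), (exp (-x * s) - exp (-x * s) * cos (t * s)) := by
      simp only [oneSubCosKernel_eq_mul_sub, integral_const_mul]
    _ = x * (1 / x - x / (x ^ 2 + t ^ 2)) := by
      rw [integral_sub (integrableOn_exp_mul_Ioi hx' 0) (integrableOn_exp_neg_mul_mul_cos hx t),
        integral_exp_mul_Ioi hx', integral_exp_neg_mul_mul_cos hx]
      simp
    _ = t ^ 2 / (x ^ 2 + t ^ 2) := by
      have : x ^ 2 + t ^ 2 ≠ 0 := by positivity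
      field_simp
      ring

lemma integral_oneSubCosKernel_left (t : ℝ) {s : ℝ} (hs : 0 < s) :
    ∫ x in Ioi (0 : ℝ), oneSubCosKernel t x s = (1 - cos (t * s)) / s ^ 2 := by
  simp only [oneSubCosKernel]
  rw [integral_mul_const, integral_mul_exp_neg_mul hs, one_div_mul_eq_div]

lemma integrable_uncurry_oneSubCosKernel (t : ℝ) :
    Integrable (Function.uncurry (oneSubCosKernel t))
      ((volume.restrict (Ioi 0)).prod (volume.restrict (Ioi 0))) := by
  refine (integrable_prod_iff
    (continuous_uncurry_oneSubCosKernel t).aestronglyMeasurable).mpr ⟨?_, ?_⟩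
  · filter_upwards [ae_restrict_mem measurableSet_Ioi] with x hx
    exact integrableOn_oneSubCosKernel_right t hx
  · refine (integrable_sq_div_sq_add_sq t).integrableOn.congr_fun (fun x hx => ?_)
      measurableSet_Ioi
    simp only [Function.uncurry_apply_pair, integral_oneSubCosKernel_right t hx,
      norm_of_nonneg (oneSubCosKernel_nonneg t _ (le_of_lt hx))]

lemma integrableOn_one_sub_cos_mul_div_sq (t : ℝ) :
    IntegrableOn (fun s : ℝ => (1 - cos (t * s)) / s ^ 2) (Ioi 0) :=
  IntegrableOn.congr_fun (integrable_uncurry_oneSubCosKernel t).integral_prod_right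
    (fun _ => integral_oneSubCosKernel_left t) measurableSet_Ioi

lemma integral_one_sub_cos_mul_div_sq (t : ℝ) :
    ∫ s in Ioi (0 : ℝ), (1 - cos (t * s)) / s ^ 2 = π / 2 * |t| :=
  calc
    _ = ∫ s in Ioi (0 : ℝ), ∫ x in Ioi (0 : ℝ), oneSubCosKernel t x s :=
      (setIntegral_congr_fun measurableSet_Ioi fun _ => integral_oneSubCosKernel_left t).symm
    _ = ∫ x in Ioi (0 : ℝ), ∫ s in Ioi (0 : ℝ), oneSubCosKernel t x s :=
      (integral_integral_swap (integrable_uncurry_oneSubCosKernel t)).symm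
    _ = ∫ x in Ioi (0 : ℝ), t ^ 2 / (x ^ 2 + t ^ 2) :=
      setIntegral_congr_fun measurableSet_Ioi fun _ => integral_oneSubCosKernel_right t
    _ = π / 2 * |t| := integral_Ioi_sq_div_sq_add_sq t

section CosineSum

variable {ι : Type*} {S : Finset ι} {c : ι → ℝ}

lemma sum_mul_cos_div_sq_eq (hc : ∑ i ∈ S, c i = 0) (ω : ι → ℝ) (s : ℝ) :
    (∑ i ∈ S, c i * cos (ω i * s)) / s ^ 2 =
      -∑ i ∈ S, c i * ((1 - cos (ω i * s)) / s ^ 2) := by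
  simp only [← mul_div_assoc, ← Finset.sum_div, mul_one_sub, Finset.sum_sub_distrib, hc, zero_sub,
    neg_div, neg_neg]

lemma integrableOn_sum_mul_cos_div_sq (hc : ∑ i ∈ S, c i = 0) (ω : ι → ℝ) :
    IntegrableOn (fun s : ℝ => (∑ i ∈ S, c i * cos (ω i * s)) / s ^ 2) (Ioi 0) := by
  simp only [sum_mul_cos_div_sq_eq hc]
  exact (integrable_finsetSum S fun i _ =>
    (integrableOn_one_sub_cos_mul_div_sq (ω i)).const_mul (c i)).neg

lemma integral_sum_mul_cos_div_sq (hc : ∑ i ∈ S, c i = 0) (ω : ι → ℝ) :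
    ∫ s in Ioi (0 : ℝ), (∑ i ∈ S, c i * cos (ω i * s)) / s ^ 2 =
      -(π / 2) * ∑ i ∈ S, c i * |ω i| := by
  simp only [sum_mul_cos_div_sq_eq hc]
  rw [integral_neg, integral_finsetSum S fun i _ =>
    (integrableOn_one_sub_cos_mul_div_sq (ω i)).const_mul (c i)]
  simp only [integral_const_mul, integral_one_sub_cos_mul_div_sq, mul_left_comm _ (π / 2),
    ← Finset.mul_sum, neg_mul]

end CosineSum

lemma sum_units_int {M : Type*} [AddCommMonoid M] (f : ℤˣ → M) : ∑ e, f e = f 1 + f (-1) := by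
  rw [UnitsInt.univ, Finset.sum_pair (units_ne_neg_self 1)]

section SineProduct

variable {ι : Type*} [Fintype ι] [DecidableEq ι] {m : ℕ}

lemma sum_prod_sign_eq_zero [Nonempty ι] : ∑ ε : ι → ℤˣ, ∏ i, (ε i : ℝ) = 0 := by
  have hfactor := Finset.prod_univ_sum (fun _ : ι => Finset.univ) fun _ (e : ℤˣ) => (e : ℝ)
  rw [Fintype.piFinset_univ] at hfactor
  rw [← hfactor]
  simp

lemma complex_sin_eq_sum_sign_mul_exp (z : ℂ) :
    Complex.sin z = (2 * Complex.I)⁻¹ * ∑ e : ℤˣ, (e : ℂ) * Complex.exp (e * z * Complex.I) := by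
  have hI : (2 * Complex.I)⁻¹ = -Complex.I / 2 := by simp [div_eq_inv_mul, mul_comm]
  simp only [Complex.sin, sum_units_int, hI, Units.val_one, Units.val_neg, Int.cast_one,
    Int.cast_neg, one_mul, neg_mul]
  ring

lemma prod_complex_sin_eq_sum_exp (z : ι → ℂ) :
    ∏ i, Complex.sin (z i) =
      ((2 * Complex.I) ^ Fintype.card ι)⁻¹ *
        ∑ ε : ι → ℤˣ, (∏ i, (ε i : ℂ)) * Complex.exp ((∑ i, (ε i : ℂ) * z i) * Complex.I) := by
  simp only [complex_sin_eq_sum_sign_mul_exp, Finset.prod_mul_distrib, Finset.prod_const,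
    Finset.card_univ, inv_pow, mul_pow, mul_inv, Finset.prod_univ_sum, Fintype.piFinset_univ,
    ← Complex.exp_sum, Finset.sum_mul]

lemma prod_sin_eq_sum_cos (hι : Fintype.card ι = 2 * m) (θ : ι → ℝ) :
    ∏ i, sin (θ i) =
      ((-4) ^ m)⁻¹ * ∑ ε : ι → ℤˣ, (∏ i, (ε i : ℝ)) * cos (∑ i, (ε i : ℝ) * θ i) := by
  have hpow : ((2 * Complex.I) ^ Fintype.card ι)⁻¹ = ((((-4) ^ m)⁻¹ : ℝ) : ℂ) := by
    rw [hι, pow_mul, mul_pow, Complex.I_sq]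
    norm_num
  have hsign (ε : ι → ℤˣ) : ∏ i, (ε i : ℂ) = ((∏ i, (ε i : ℝ) : ℝ) : ℂ) := by
    push_cast
    rfl
  have hphase (ε : ι → ℤˣ) :
      ∑ i, (ε i : ℂ) * (θ i : ℂ) = ((∑ i, (ε i : ℝ) * θ i : ℝ) : ℂ) := by
    push_cast
    rfl
  have hprod := congrArg Complex.re (prod_complex_sin_eq_sum_exp fun i => (θ i : ℂ))
  simpa only [hpow, hsign, hphase, ← Complex.ofReal_sin, ← Complex.ofReal_prod,
    Complex.ofReal_re, Complex.re_sum, Complex.re_ofReal_mul, Complex.exp_ofReal_mul_I_re]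
    using hprod

lemma prod_sin_mul_div_sq_eq_sum_cos (hι : Fintype.card ι = 2 * m) (a : ι → ℝ) (s : ℝ) :
    (∏ i, sin (a i * s)) / s ^ 2 = ((-4) ^ m)⁻¹ *
      ((∑ ε : ι → ℤˣ, (∏ i, (ε i : ℝ)) * cos ((∑ i, (ε i : ℝ) * a i) * s)) / s ^ 2) := by
  simp only [prod_sin_eq_sum_cos hι, Finset.sum_mul, mul_assoc, mul_div_assoc]

end SineProduct

section SineIntegral

variable {ι : Type*} [Fintype ι] [Nonempty ι] {m : ℕ}

lemma integrableOn_prod_sin_mul_div_sq (hι : Fintype.card ι = 2 * m) (a : ι → ℝ) :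
    IntegrableOn (fun s : ℝ => (∏ i, sin (a i * s)) / s ^ 2) (Ioi 0) := by
  classical
  simp only [prod_sin_mul_div_sq_eq_sum_cos hι]
  exact (integrableOn_sum_mul_cos_div_sq sum_prod_sign_eq_zero _).const_mul _

lemma integral_prod_sin_mul_div_sq [DecidableEq ι] (hι : Fintype.card ι = 2 * m) (a : ι → ℝ) :
    ∫ s in Ioi (0 : ℝ), (∏ i, sin (a i * s)) / s ^ 2 =
      ((-4) ^ m)⁻¹ *
        (-(π / 2) * ∑ ε : ι → ℤˣ, (∏ i, (ε i : ℝ)) * |∑ i, (ε i : ℝ) * a i|) := by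
  simp only [prod_sin_mul_div_sq_eq_sum_cos hι]
  rw [integral_const_mul, integral_sum_mul_cos_div_sq sum_prod_sign_eq_zero]

end SineIntegral

lemma sum_fin_succ_pi_eq_sum_vecCons {α M : Type*} [Fintype α] [AddCommMonoid M]
    {n : ℕ} (f : (Fin (n + 1) → α) → M) :
    ∑ v, f v = ∑ x, ∑ w, f (Matrix.vecCons x w) := by
  rw [← (Fin.consEquiv fun _ => α).sum_comp, Fintype.sum_prod_type]
  rfl

lemma sum_prod_sign_mul_abs_fin_four (a b c d : ℝ) :
    ∑ ε : Fin 4 → ℤˣ, (∏ i, (ε i : ℝ)) * |∑ i, (ε i : ℝ) * ![a, b, c, d] i| =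
      -2 * (|a + b + c - d| + |a + b - c + d| + |a - b + c + d| + |-a + b + c + d|
        - |a + b + c + d| - |a + b - c - d| - |a - b + c - d| - |a - b - c + d|) := by
  simp only [sum_fin_succ_pi_eq_sum_vecCons, sum_units_int, Fin.sum_univ_four, Fin.prod_univ_four,
    Matrix.cons_val, Fintype.sum_unique, Units.val_one, Units.val_neg, Int.cast_one, Int.cast_neg]
  -- The sign vectors `ε` and `-ε` contribute equally, which pairs the sixteen terms.
  grind

lemma signed_sum_abs_eq_deficit {a b c d : ℝ} (hab : a ≤ b) (hac : a ≤ c)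
    (hlo : b + c - a ≤ d) (hhi : d ≤ a + b + c) :
    |a + b + c - d| + |a + b - c + d| + |a - b + c + d| + |-a + b + c + d|
      - |a + b + c + d| - |a + b - c - d| - |a - b + c - d| - |a - b - c + d| =
      2 * (a + b + c - d) := by
  rw [abs_of_nonneg (by linarith : 0 ≤ a + b + c - d),
    abs_of_nonneg (by linarith : 0 ≤ a + b - c + d),
    abs_of_nonneg (by linarith : 0 ≤ a - b + c + d),
    abs_of_nonneg (by linarith : 0 ≤ -a + b + c + d),
    abs_of_nonneg (by linarith : 0 ≤ a + b + c + d),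
    abs_of_nonpos (by linarith : a + b - c - d ≤ 0),
    abs_of_nonpos (by linarith : a - b + c - d ≤ 0),
    abs_of_nonneg (by linarith : 0 ≤ a - b - c + d)]
  ring

theorem quadruple_sine_integral_deficit_general (a b c d : ℝ) :
    IntegrableOn (fun s : ℝ => sin (a * s) * sin (b * s) * sin (c * s) * sin (d * s) / s ^ 2)
      (Ioi 0) ∧
    ∫ s in Ioi (0 : ℝ), sin (a * s) * sin (b * s) * sin (c * s) * sin (d * s) / s ^ 2 =
      π / 16 * (|a + b + c - d| + |a + b - c + d| + |a - b + c + d| + |-a + b + c + d|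
        - |a + b + c + d| - |a + b - c - d| - |a - b + c - d| - |a - b - c + d|) := by
  have hcard : Fintype.card (Fin 4) = 2 * 2 := by simp
  have hprod (s : ℝ) : sin (a * s) * sin (b * s) * sin (c * s) * sin (d * s) =
      ∏ i, sin (![a, b, c, d] i * s) := by simp [Fin.prod_univ_four]
  simp only [hprod]
  refine ⟨integrableOn_prod_sin_mul_div_sq hcard _, ?_⟩
  rw [integral_prod_sin_mul_div_sq hcard, sum_prod_sign_mul_abs_fin_four]
  ring

/-- **Quadruple sine integral, deficit regime** (Lemma 3.3): for `0 < a ≤ b ≤ c ≤ d` with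
`b + c − a ≤ d ≤ a + b + c`, the function `s ↦ sin(as) sin(bs) sin(cs) sin(ds)/s²` is
absolutely integrable on `(0,∞)` and its integral equals `(π/8)·(a + b + c − d)`. -/
theorem quadruple_sine_integral_deficit (a b c d : ℝ) (ha : 0 < a)
    (hab : a ≤ b) (hbc : b ≤ c) (hcd : c ≤ d)
    (hlo : b + c - a ≤ d) (hhi : d ≤ a + b + c) :
    IntegrableOn
      (fun s : ℝ => Real.sin (a*s) * Real.sin (b*s) * Real.sin (c*s) * Real.sin (d*s) / s^2)
      (Set.Ioi 0) ∧
    ∫ s in Set.Ioi (0:ℝ),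
        Real.sin (a*s) * Real.sin (b*s) * Real.sin (c*s) * Real.sin (d*s) / s^2
      = Real.pi / 8 * (a + b + c - d) := by
  obtain ⟨hint, hval⟩ := quadruple_sine_integral_deficit_general a b c d
  exact ⟨hint, by rw [hval, signed_sum_abs_eq_deficit hab (hab.trans hbc) hlo hhi]; ring⟩
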